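/- (Cohomological obstruction) Let ε : Ω^0 → ℝ be any linear map (for the de Rham complex of a manifold, evaluation at a point). Define c : 𝔤^{n+1} → ℝ by c(x_1,…,x_{n+1}) := ε(ι(v_{x_1}∧⋯∧v_{x_{n+1}})ω). Then c is an alternating multilinear map with d_𝔤 c = 0; and if there exists a homotopy moment map (f_1,…,f_n) for ω, then c is a Chevalley–Eilenberg coboundary: the alternating map ψ := (−1)^n·ς(n)·(ε∘f_n) : 𝔤^n → ℝ satisfies d_𝔤 ψ = c. -/

import Mathlib

/-- Cartan calculus data over ℝ: a module `carrier` with graded pieces `deg i`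
(`deg i = ⊥` for `i < 0`), a degree-`+1` differential `d` squaring to zero,
a real Lie algebra `X`, contractions `ι v` of degree `-1` depending linearly on `v`,
pairwise anticommuting, and satisfying the Cartan relation
`𝓛_v ∘ ι_w - ι_w ∘ 𝓛_v = ι_[v,w]` where `𝓛_v = d ∘ ι_v + ι_v ∘ d`. -/
structure CartanCalculus where
  carrier : Type
  [addCommGroup : AddCommGroup carrier]
  [module : Module ℝ carrier]
  deg : ℤ → Submodule ℝ carrier
  deg_neg : ∀ i : ℤ, i < 0 → deg i = ⊥
  d : carrier →ₗ[ℝ] carrier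
  d_deg : ∀ i : ℤ, ∀ a ∈ deg i, d a ∈ deg (i + 1)
  d_d : ∀ a : carrier, d (d a) = 0
  X : Type
  [lieRingX : LieRing X]
  [lieAlgebraX : LieAlgebra ℝ X]
  ι : X →ₗ[ℝ] carrier →ₗ[ℝ] carrier
  ι_deg : ∀ (v : X) (i : ℤ), ∀ a ∈ deg i, ι v a ∈ deg (i - 1)
  ι_ι : ∀ (v w : X) (a : carrier), ι v (ι w a) = - ι w (ι v a)
  cartan : ∀ (v w : X) (a : carrier),
      (d (ι v (ι w a)) + ι v (d (ι w a))) - ι w (d (ι v a) + ι v (d a)) = ι ⁅v, w⁆ a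

attribute [instance] CartanCalculus.addCommGroup CartanCalculus.module
  CartanCalculus.lieRingX CartanCalculus.lieAlgebraX

namespace CartanCalculus

/-- The Lie derivative `𝓛_v = d ∘ ι_v + ι_v ∘ d`. -/
def L (C : CartanCalculus) (v : C.X) : C.carrier →ₗ[ℝ] C.carrier :=
  C.d ∘ₗ C.ι v + C.ι v ∘ₗ C.d

/-- Iterated contraction: `iotaL [v₁, …, v_k] = ι_{v_k} ∘ ⋯ ∘ ι_{v₁}`, i.e. the
contraction `ι(v₁ ∧ ⋯ ∧ v_k)` (`ι_{v₁}` acts first). -/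
def iotaL (C : CartanCalculus) : List C.X → C.carrier →ₗ[ℝ] C.carrier
  | [] => LinearMap.id
  | v :: vs => (C.iotaL vs).comp (C.ι v)

end CartanCalculus

/-- Interpret a list as a `Fin k`-tuple (junk value `0` out of range). -/
def listToFun {α : Type} [Zero α] (k : ℕ) (l : List α) : Fin k → α :=
  fun m => l.getD m.val 0

/-- A map `𝔤^k → W` is multilinear. -/
def IsMultilinear {𝔤 : Type} [AddCommGroup 𝔤] [Module ℝ 𝔤] {W : Type}
    [AddCommGroup W] [Module ℝ W] {k : ℕ} (ψ : (Fin k → 𝔤) → W) : Prop :=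
  ∀ (x : Fin k → 𝔤) (i : Fin k),
    (∀ a b : 𝔤, ψ (Function.update x i (a + b))
        = ψ (Function.update x i a) + ψ (Function.update x i b)) ∧
    (∀ (c : ℝ) (a : 𝔤), ψ (Function.update x i (c • a)) = c • ψ (Function.update x i a))

/-- A map `𝔤^k → W` is alternating. -/
def IsAlternating {𝔤 : Type} {W : Type} [AddCommGroup W] {k : ℕ}
    (ψ : (Fin k → 𝔤) → W) : Prop :=
  ∀ (x : Fin k → 𝔤) (i j : Fin k), i ≠ j → x i = x j → ψ x = 0

/-- The Chevalley–Eilenberg differential of a `k`-cochain `ψ`: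
`(d_𝔤 ψ)(x₁,…,x_{k+1}) = Σ_{i<j} (-1)^{i+j} ψ([x_i,x_j], x₁, …, x̂_i, …, x̂_j, …, x_{k+1})`
(signs written for 1-based indices, as in the paper). -/
def dCE {𝔤 : Type} [LieRing 𝔤] [LieAlgebra ℝ 𝔤] {W : Type} [AddCommGroup W]
    [Module ℝ W] (k : ℕ) (ψ : (Fin k → 𝔤) → W) : (Fin (k + 1) → 𝔤) → W :=
  fun x => ∑ i : Fin (k + 1), ∑ j : Fin (k + 1),
    if (i : ℕ) < (j : ℕ) then
      ((-1 : ℝ) ^ ((i : ℕ) + (j : ℕ))) •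
        ψ (listToFun k (⁅x i, x j⁆ :: (((List.ofFn x).eraseIdx (j : ℕ)).eraseIdx (i : ℕ))))
    else 0

namespace CartanCalculus

/-- `σ_k(x₁,…,x_k) = ι(v_{x₁} ∧ ⋯ ∧ v_{x_k}) σ` where `v_x = ρ x`. -/
def lower (C : CartanCalculus) {𝔤 : Type} [LieRing 𝔤] [LieAlgebra ℝ 𝔤]
    (ρ : 𝔤 →ₗ⁅ℝ⁆ C.X) (k : ℕ) (σ : C.carrier) : (Fin k → 𝔤) → C.carrier :=
  fun x => C.iotaL (List.ofFn (fun i => ρ (x i))) σ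

/-- `F_k(x₁,…,x_k) = ι(v_{x₁} ∧ ⋯ ∧ v_{x_{k-1}}) (F x_k)`, with `F₀ := 0`. -/
def lowerF (C : CartanCalculus) {𝔤 : Type} [LieRing 𝔤] [LieAlgebra ℝ 𝔤]
    (ρ : 𝔤 →ₗ⁅ℝ⁆ C.X) (F : 𝔤 → C.carrier) : (k : ℕ) → (Fin k → 𝔤) → C.carrier
  | 0 => fun _ => 0
  | (k + 1) => fun x =>
      C.iotaL (List.ofFn (fun i : Fin k => ρ (x i.castSucc))) (F (x (Fin.last k)))

end CartanCalculus

/-- `ς(k) = -(-1)^{k(k+1)/2}`. -/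
def varsigma (k : ℕ) : ℝ := -((-1 : ℝ) ^ (k * (k + 1) / 2))

/-- A homotopy moment map for the invariant closed form `ω ∈ Ω^{n+1}`
(componentwise form of Def. 5.1 in [FRZ]): a family of alternating multilinear maps
`f_k : 𝔤^k → Ω^{n-k}` (`k = 1, …, n`) satisfying the moment map equations. -/
def IsMomentMap (C : CartanCalculus) {𝔤 : Type} [LieRing 𝔤] [LieAlgebra ℝ 𝔤]
    (ρ : 𝔤 →ₗ⁅ℝ⁆ C.X) (n : ℕ) (ω : C.carrier)
    (f : (k : ℕ) → (Fin k → 𝔤) → C.carrier) : Prop :=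
  (∀ k : ℕ, 1 ≤ k → k ≤ n →
      IsMultilinear (f k) ∧ IsAlternating (f k) ∧ ∀ x, f k x ∈ C.deg ((n : ℤ) - (k : ℤ))) ∧
  (∀ x : 𝔤, C.d (f 1 (fun _ => x)) = - C.ι (ρ x) ω) ∧
  (∀ k : ℕ, 2 ≤ k → k ≤ n → ∀ x : Fin k → 𝔤,
      (∑ i : Fin k, ∑ j : Fin k,
        if (i : ℕ) < (j : ℕ) then
          ((-1 : ℝ) ^ ((i : ℕ) + (j : ℕ) + 1)) •
            f (k - 1) (listToFun (k - 1)
              (⁅x i, x j⁆ :: (((List.ofFn x).eraseIdx (j : ℕ)).eraseIdx (i : ℕ))))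
        else 0)
      = C.d (f k x) + varsigma k • C.lower ρ k ω x) ∧
  (∀ x : Fin (n + 1) → 𝔤,
      (∑ i : Fin (n + 1), ∑ j : Fin (n + 1),
        if (i : ℕ) < (j : ℕ) then
          ((-1 : ℝ) ^ ((i : ℕ) + (j : ℕ) + 1)) •
            f n (listToFun n
              (⁅x i, x j⁆ :: (((List.ofFn x).eraseIdx (j : ℕ)).eraseIdx (i : ℕ))))
        else 0)
      = varsigma (n + 1) • C.lower ρ (n + 1) ω x)

/-- Iterated contraction lowers the degree by the number of vectors. -/
lemma CartanCalculus.iotaL_deg (C : CartanCalculus) (l : List C.X) (i : ℤ)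
    (a : C.carrier) (ha : a ∈ C.deg i) :
    C.iotaL l a ∈ C.deg (i - (l.length : ℤ)) := by
  induction l generalizing i a with
  | nil => simpa [CartanCalculus.iotaL] using ha
  | cons v vs ih =>
      have h1 : C.ι v a ∈ C.deg (i - 1) := C.ι_deg v i a ha
      have h2 := ih (i - 1) (C.ι v a) h1
      have heq : i - 1 - (vs.length : ℤ) = i - ((v :: vs).length : ℤ) := by
        simp only [List.length_cons]
        push_cast
        ring
      have h3 : C.iotaL (v :: vs) a = C.iotaL vs (C.ι v a) := rfl
      rw [h3, ← heq]
      exact h2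

/-- The full contraction of `ω ∈ Ω^{n+1}` by `n+1` vectors lands in `Ω^0`. -/
lemma CartanCalculus.lower_mem_deg_zero (C : CartanCalculus) {𝔤 : Type} [LieRing 𝔤]
    [LieAlgebra ℝ 𝔤] (ρ : 𝔤 →ₗ⁅ℝ⁆ C.X) (n : ℕ) (ω : C.carrier)
    (hω : ω ∈ C.deg ((n : ℤ) + 1)) (x : Fin (n + 1) → 𝔤) :
    C.lower ρ (n + 1) ω x ∈ C.deg 0 := by
  have h := C.iotaL_deg (List.ofFn (fun i => ρ (x i))) ((n : ℤ) + 1) ω hω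
  have heq : (n : ℤ) + 1 - ((List.ofFn (fun i : Fin (n + 1) => ρ (x i))).length : ℤ)
      = 0 := by
    simp
  show C.iotaL (List.ofFn (fun i => ρ (x i))) ω ∈ C.deg 0
  rw [← heq]
  exact h

/-- The cochain `c : 𝔤^{n+1} → ℝ`, `c(x₁,…,x_{n+1}) = ε(ι(v_{x₁}∧⋯∧v_{x_{n+1}})ω)`,
i.e. `(-1)^n ω_{n+1}` evaluated by `ε : Ω^0 → ℝ` (without the sign). -/
def obstructionCocycle (C : CartanCalculus) {𝔤 : Type} [LieRing 𝔤] [LieAlgebra ℝ 𝔤]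
    (ρ : 𝔤 →ₗ⁅ℝ⁆ C.X) (n : ℕ) (ω : C.carrier) (hω : ω ∈ C.deg ((n : ℤ) + 1))
    (ε : C.deg 0 →ₗ[ℝ] ℝ) : (Fin (n + 1) → 𝔤) → ℝ :=
  fun x => ε ⟨C.lower ρ (n + 1) ω x, C.lower_mem_deg_zero ρ n ω hω x⟩

/-!
Write `c_k(a)(x_0, …, x_{k-1}) = ι(v_{x_0} ∧ ⋯ ∧ v_{x_{k-1}}) a`. Since `ι_v ∘ ι_v = 0`,
contraction factors through the exterior algebra, so `c_k(a)` is alternating multilinear. Its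
Chevalley–Eilenberg differential satisfies the multi-vector Cartan formula
`d_𝔤 c_k(a) = (-1)^{k+1} d ∘ c_{k+1}(a) - c_{k+1}(da) + Σ_i (-1)^i c_k(𝓛_{v_{x_i}} a)(…, x̂_i, …)`,
proved by induction on `k`: contracting `d_𝔤` with its first argument produces the bracket terms
that arise when `𝓛_{v_{x_i}}` is moved past `ι_{v_{x_0}}`. For a closed invariant `ω` of degree
`n + 1` and `k = n + 1` only `d ∘ c_{n+2}(ω)` survives, and it vanishes for degree reasons. The
coboundary claim is the last moment map equation up to sign, since `(-1)^n ς(n) ς(n+1) = -1`.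
-/

section Tuples

variable {α : Type} {k : ℕ}

lemma listToFun_cons [Zero α] (a : α) (l : List α) :
    listToFun (k + 1) (a :: l) = Matrix.vecCons a (listToFun k l) := by
  ext i
  cases i using Fin.cases <;> simp [listToFun]

lemma listToFun_eraseIdx_ofFn [Zero α] (x : Fin (k + 1) → α) (j : Fin (k + 1)) :
    listToFun k ((List.ofFn x).eraseIdx j) = j.removeNth x := by
  ext i
  rcases lt_or_ge (i : ℕ) j with hij | hij
  · simp [listToFun, List.getElem?_eraseIdx, hij, Fin.removeNth, -List.ofFn_succ,
      Fin.succAbove_of_castSucc_lt j i hij, Fin.castSucc, Fin.castAdd, Fin.castLE]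
  · simp [listToFun, List.getElem?_eraseIdx, hij.not_gt, Fin.removeNth, -List.ofFn_succ,
      Fin.succAbove_of_le_castSucc j i hij, Fin.succ]

lemma removeNth_succ_eq_vecCons (x : Fin (k + 2) → α) (j : Fin (k + 1)) :
    j.succ.removeNth x = Matrix.vecCons (x 0) (j.removeNth (Fin.tail x)) := by
  ext i
  cases i using Fin.cases <;> simp [Fin.removeNth, Fin.tail]

end Tuples

section Alternating

lemma alternatingMap_vecCons_swap {R M N : Type*} [Semiring R] [AddCommMonoid M] [Module R M]
    [AddCommGroup N] [Module R N] {k : ℕ} (ψ : M [⋀^Fin (k + 2)]→ₗ[R] N) (a b : M)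
    (v : Fin k → M) :
    ψ (Matrix.vecCons a (Matrix.vecCons b v)) = -ψ (Matrix.vecCons b (Matrix.vecCons a v)) := by
  rw [← ψ.map_swap _ (zero_ne_one (α := Fin (k + 2)))]
  congr 1
  ext i
  refine Fin.cases ?_ (Fin.cases ?_ fun i => ?_) i
  · simp
  · simp
  · simp [Equiv.swap_apply_of_ne_of_ne, Fin.ext_iff]

variable {E V W : Type} [AddCommGroup E] [Module ℝ E] [AddCommGroup V] [Module ℝ V]
  [AddCommGroup W] [Module ℝ W] {k : ℕ}

lemma isMultilinear_alternatingMap (ψ : E [⋀^Fin k]→ₗ[ℝ] W) : IsMultilinear ψ :=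
  fun x i => ⟨ψ.map_update_add x i, ψ.map_update_smul x i⟩

lemma isAlternating_alternatingMap (ψ : E [⋀^Fin k]→ₗ[ℝ] W) : IsAlternating ψ :=
  fun x _ _ hij hx => ψ.map_eq_zero_of_eq x hx hij

lemma IsAlternating.linearMap_comp {α : Type} {ψ : (Fin k → α) → V} (hψ : IsAlternating ψ)
    (g : V →ₗ[ℝ] W) : IsAlternating fun x => g (ψ x) :=
  fun x i j hij hx => (congrArg g (hψ x i j hij hx)).trans (map_zero g)

end Alternating

section ChevalleyEilenberg

variable {𝔤 V W : Type} [LieRing 𝔤] [LieAlgebra ℝ 𝔤] [AddCommGroup V] [Module ℝ V]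
  [AddCommGroup W] [Module ℝ W] {k : ℕ}

lemma dCE_linearMap_comp (g : V →ₗ[ℝ] W) (ψ : (Fin k → 𝔤) → V) (x : Fin (k + 1) → 𝔤) :
    dCE k (fun y => g (ψ y)) x = g (dCE k ψ x) := by
  simp only [dCE, map_sum, apply_ite g, map_smul, map_zero]

/-- Cartan's formula `ι_u ∘ d_𝔤 = 𝓛_u - d_𝔤 ∘ ι_u` on Chevalley–Eilenberg cochains, with
`u = x 0`. -/
lemma dCE_alternatingMap_succ (ψ : 𝔤 [⋀^Fin (k + 1)]→ₗ[ℝ] W) (x : Fin (k + 2) → 𝔤) :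
    dCE (k + 1) ψ x = -dCE k (ψ.curryLeft (x 0)) (Fin.tail x) -
      ∑ j : Fin (k + 1), (-1 : ℝ) ^ (j : ℕ) •
        ψ (Matrix.vecCons ⁅x 0, x j.succ⁆ (j.removeNth (Fin.tail x))) := by
  have ofFn_eq_cons : List.ofFn x = x 0 :: List.ofFn (Fin.tail x) := List.ofFn_succ
  have swap_head {i j : Fin (k + 1)} (hij : (i : ℕ) < j) (b : 𝔤) (l : List 𝔤) :
      ψ (Matrix.vecCons b (listToFun k (x 0 :: l))) =
        -ψ.curryLeft (x 0) (listToFun k (b :: l)) := by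
    obtain _ | m := k
    · omega
    · simp only [listToFun_cons, alternatingMap_vecCons_swap ψ b,
        AlternatingMap.curryLeft_apply_apply]
  simp only [dCE, Fin.sum_univ_succ (n := k + 1), ofFn_eq_cons, Fin.val_zero, Fin.val_succ,
    not_lt_zero, Nat.zero_lt_succ, add_lt_add_iff_right, if_true, if_false, zero_add,
    List.eraseIdx_cons_succ, List.eraseIdx_cons_zero, listToFun_cons _ (List.eraseIdx _ _),
    listToFun_eraseIdx_ofFn]
  rw [add_comm, sub_eq_add_neg]
  simp only [← Finset.sum_neg_distrib]
  congr 1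
  · refine Finset.sum_congr rfl fun i _ => Finset.sum_congr rfl fun j _ => ?_
    split_ifs with hij
    · rw [swap_head hij, smul_neg]
      simp [pow_add, Fin.tail]
    · exact neg_zero.symm
  · simp only [pow_succ, mul_neg_one, neg_smul]

end ChevalleyEilenberg

namespace CartanCalculus

variable (C : CartanCalculus)

lemma ι_self (v : C.X) (a : C.carrier) : C.ι v (C.ι v a) = 0 :=
  have : IsAddTorsionFree C.carrier := .of_isTorsionFree ℝ C.carrier
  self_eq_neg.mp (C.ι_ι v v a)

/-- Contraction of forms with multivectors. It takes values in the opposite of the endomorphism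
algebra because in `ι(v₁ ∧ ⋯ ∧ v_k) = ι_{v_k} ∘ ⋯ ∘ ι_{v₁}` the first vector acts first. -/
def multivectorContraction : ExteriorAlgebra ℝ C.X →ₐ[ℝ] (Module.End ℝ C.carrier)ᵐᵒᵖ :=
  ExteriorAlgebra.lift ℝ ⟨(MulOpposite.opLinearEquiv ℝ).toLinearMap ∘ₗ C.ι, fun v =>
    MulOpposite.unop_injective (LinearMap.ext (C.ι_self v))⟩

lemma iotaL_eq_unop_multivectorContraction (l : List C.X) :
    C.iotaL l = (C.multivectorContraction (l.map (ExteriorAlgebra.ι ℝ)).prod).unop := by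
  induction l with
  | nil => simp [iotaL, Module.End.one_eq_id]
  | cons v l ih => simp [iotaL, ih, multivectorContraction, Module.End.mul_eq_comp]

lemma L_ι (v w : C.X) (a : C.carrier) :
    C.L v (C.ι w a) = C.ι w (C.L v a) + C.ι ⁅v, w⁆ a := by
  rw [← C.cartan v w a]
  simp [L]

variable {C} {𝔤 : Type} [LieRing 𝔤] [LieAlgebra ℝ 𝔤] (ρ : 𝔤 →ₗ⁅ℝ⁆ C.X) {k : ℕ}

lemma lower_add (a b : C.carrier) (x : Fin k → 𝔤) :
    C.lower ρ k (a + b) x = C.lower ρ k a x + C.lower ρ k b x :=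
  map_add _ a b

lemma lower_zero (x : Fin k → 𝔤) : C.lower ρ k 0 x = 0 :=
  map_zero _

lemma lower_succ (a : C.carrier) (x : Fin (k + 1) → 𝔤) :
    C.lower ρ (k + 1) a x = C.lower ρ k (C.ι (ρ (x 0)) a) (Fin.tail x) := by
  rw [lower, List.ofFn_succ]
  rfl

lemma lower_vecCons (a : C.carrier) (u : 𝔤) (x : Fin k → 𝔤) :
    C.lower ρ (k + 1) a (Matrix.vecCons u x) = C.lower ρ k (C.ι (ρ u) a) x :=
  lower_succ ρ a _

lemma lower_eq_zero_of_mem_deg {a : C.carrier} {i : ℤ} (ha : a ∈ C.deg i) (hik : i < k)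
    (x : Fin k → 𝔤) : C.lower ρ k a x = 0 := by
  have mem_deg : C.lower ρ k a x ∈ C.deg (i - k) := by
    simpa [lower] using C.iotaL_deg (List.ofFn fun j => ρ (x j)) i a ha
  rwa [C.deg_neg _ (by omega), Submodule.mem_bot] at mem_deg

variable (k) in
/-- `C.lower ρ k a` bundled as an alternating map: the contraction of `a` with the decomposable
multivector `ρ x₁ ∧ ⋯ ∧ ρ x_k`. -/
def lowerAlternating (a : C.carrier) : 𝔤 [⋀^Fin k]→ₗ[ℝ] C.carrier :=
  ((LinearMap.applyₗ a ∘ₗ (MulOpposite.opLinearEquiv ℝ).symm.toLinearMap ∘ₗ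
    C.multivectorContraction.toLinearMap).compAlternatingMap
      (ExteriorAlgebra.ιMulti ℝ k)).compLinearMap ρ

lemma coe_lowerAlternating (a : C.carrier) : ⇑(lowerAlternating ρ k a) = C.lower ρ k a := by
  ext x
  simp [lowerAlternating, lower, iotaL_eq_unop_multivectorContraction,
    ExteriorAlgebra.ιMulti_apply, List.map_ofFn, Function.comp_def]

lemma lowerAlternating_curryLeft (a : C.carrier) (u : 𝔤) :
    (lowerAlternating ρ (k + 1) a).curryLeft u = lowerAlternating ρ k (C.ι (ρ u) a) := by
  ext x
  simp [coe_lowerAlternating, lower_vecCons]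

lemma lower_L_removeNth_succ (a : C.carrier) (x : Fin (k + 2) → 𝔤) (i : Fin (k + 1)) :
    C.lower ρ (k + 1) (C.L (ρ (x i.succ)) a) (i.succ.removeNth x) =
      C.lower ρ k (C.L (ρ (x i.succ)) (C.ι (ρ (x 0)) a)) (i.removeNth (Fin.tail x)) +
      C.lower ρ (k + 1) a (Matrix.vecCons ⁅x 0, x i.succ⁆ (i.removeNth (Fin.tail x))) := by
  have ι_bracket : C.ι ⁅ρ (x i.succ), ρ (x 0)⁆ a = -C.ι (ρ ⁅x 0, x i.succ⁆) a := by
    rw [LieHom.map_lie, ← lie_skew, map_neg, LinearMap.neg_apply]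
  rw [removeNth_succ_eq_vecCons, lower_vecCons, lower_vecCons, ← lower_add, L_ι, ι_bracket,
    neg_add_cancel_right]

theorem dCE_lower (a : C.carrier) (x : Fin (k + 1) → 𝔤) :
    dCE k (C.lower ρ k a) x =
      (-1 : ℝ) ^ (k + 1) • C.d (C.lower ρ (k + 1) a x) - C.lower ρ (k + 1) (C.d a) x +
      ∑ i : Fin (k + 1), (-1 : ℝ) ^ (i : ℕ) •
        C.lower ρ k (C.L (ρ (x i)) a) (i.removeNth x) := by
  induction k generalizing a with
  | zero => simp [dCE, lower, L, iotaL]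
  | succ k ih =>
    have lower_L_head : C.lower ρ (k + 1) (C.L (ρ (x 0)) a) (Fin.tail x) =
        C.lower ρ (k + 1) (C.d (C.ι (ρ (x 0)) a)) (Fin.tail x) +
          C.lower ρ (k + 1) (C.ι (ρ (x 0)) (C.d a)) (Fin.tail x) := lower_add ..
    rw [← coe_lowerAlternating, dCE_alternatingMap_succ, lowerAlternating_curryLeft,
      coe_lowerAlternating, coe_lowerAlternating, ih, Fin.sum_univ_succ (n := k + 1),
      Fin.removeNth_zero, lower_L_head, lower_succ ρ a, lower_succ ρ (C.d a)]
    simp only [lower_L_removeNth_succ, Fin.tail, Fin.val_succ, Fin.val_zero, pow_zero, one_smul,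
      pow_succ, mul_neg_one, neg_smul, smul_add, Finset.sum_add_distrib, Finset.sum_neg_distrib]
    abel

theorem dCE_lower_eq_zero_of_closed_of_invariant {ω : C.carrier} (hω : ω ∈ C.deg k)
    (hcl : C.d ω = 0) (hinv : ∀ x : 𝔤, C.L (ρ x) ω = 0) (x : Fin (k + 1) → 𝔤) :
    dCE k (C.lower ρ k ω) x = 0 := by
  simp [dCE_lower, hcl, hinv, lower_zero,
    lower_eq_zero_of_mem_deg ρ hω (k := k + 1) (by omega)]

lemma obstructionCocycle_comp_subtype (n : ℕ) {ω : C.carrier} (hω : ω ∈ C.deg ((n : ℤ) + 1))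
    (e : C.carrier →ₗ[ℝ] ℝ) :
    obstructionCocycle C ρ n ω hω (e ∘ₗ (C.deg 0).subtype) =
      e.compAlternatingMap (lowerAlternating ρ (n + 1) ω) := by
  ext x
  simp [obstructionCocycle, coe_lowerAlternating]

end CartanCalculus

lemma varsigma_mul_self (k : ℕ) : varsigma k * varsigma k = 1 := by
  simp [varsigma, ← mul_pow]

lemma varsigma_succ (k : ℕ) : varsigma (k + 1) = (-1) ^ (k + 1) * varsigma k := by
  have triangle : (k + 1) * (k + 1 + 1) / 2 = k * (k + 1) / 2 + (k + 1) := by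
    simpa [mul_comm] using Nat.triangle_succ (k + 1)
  rw [varsigma, varsigma, triangle, pow_add]
  ring

lemma neg_one_pow_mul_varsigma_mul_varsigma_succ (k : ℕ) :
    (-1 : ℝ) ^ k * varsigma k * varsigma (k + 1) = -1 := by
  have pow_mul_self : (-1 : ℝ) ^ k * (-1) ^ k = 1 := by simp [← mul_pow]
  rw [varsigma_succ, pow_succ]
  linear_combination -(varsigma k * varsigma k) * pow_mul_self - varsigma_mul_self k

lemma IsMomentMap.dCE_top {C : CartanCalculus} {𝔤 : Type} [LieRing 𝔤] [LieAlgebra ℝ 𝔤]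
    {ρ : 𝔤 →ₗ⁅ℝ⁆ C.X} {n : ℕ} {ω : C.carrier} {f : (k : ℕ) → (Fin k → 𝔤) → C.carrier}
    (hf : IsMomentMap C ρ n ω f) (x : Fin (n + 1) → 𝔤) :
    dCE n (f n) x = -varsigma (n + 1) • C.lower ρ (n + 1) ω x := by
  rw [neg_smul, ← hf.2.2.2 x]
  simp only [dCE, ← Finset.sum_neg_distrib, pow_succ, mul_neg_one, neg_smul]
  refine Finset.sum_congr rfl fun i _ => Finset.sum_congr rfl fun j _ => ?_
  split_ifs <;> simp

/-- cohomological obstruction, §5 of the paper. For any linear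
`ε : Ω^0 → ℝ`, the cochain `c(x₁,…,x_{n+1}) = ε(ι(v_{x₁}∧⋯∧v_{x_{n+1}})ω)` is
alternating multilinear with `d_𝔤 c = 0`, and if a homotopy moment map
`(f₁,…,f_n)` for `ω` exists then `c = d_𝔤 ψ` for
`ψ := (-1)^n ς(n)·(ε ∘ f_n)`. -/
theorem obstruction_cocycle_is_coboundary (C : CartanCalculus) {𝔤 : Type}
    [LieRing 𝔤] [LieAlgebra ℝ 𝔤] (ρ : 𝔤 →ₗ⁅ℝ⁆ C.X) (n : ℕ) (hn : 1 ≤ n)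
    (ω : C.carrier) (hω : ω ∈ C.deg ((n : ℤ) + 1)) (hcl : C.d ω = 0)
    (hinv : ∀ x : 𝔤, C.L (ρ x) ω = 0) (ε : C.deg 0 →ₗ[ℝ] ℝ) :
    (IsMultilinear (obstructionCocycle C ρ n ω hω ε) ∧
     IsAlternating (obstructionCocycle C ρ n ω hω ε) ∧
     (∀ x : Fin (n + 2) → 𝔤, dCE (n + 1) (obstructionCocycle C ρ n ω hω ε) x = 0)) ∧
    (∀ f : (k : ℕ) → (Fin k → 𝔤) → C.carrier, ∀ hf : IsMomentMap C ρ n ω f,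
      IsAlternating (fun y : Fin n → 𝔤 =>
        ((-1 : ℝ) ^ n * varsigma n) *
          ε ⟨f n y, by simpa using (hf.1 n hn le_rfl).2.2 y⟩) ∧
      ∀ x : Fin (n + 1) → 𝔤,
        dCE n (fun y : Fin n → 𝔤 =>
          ((-1 : ℝ) ^ n * varsigma n) *
            ε ⟨f n y, by simpa using (hf.1 n hn le_rfl).2.2 y⟩) x
        = obstructionCocycle C ρ n ω hω ε x) := by
  obtain ⟨e, rfl⟩ := ε.exists_extend
  refine ⟨?_, fun f hf => ⟨?_, fun x => ?_⟩⟩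
  · rw [CartanCalculus.obstructionCocycle_comp_subtype]
    refine ⟨isMultilinear_alternatingMap _, isAlternating_alternatingMap _, fun x => ?_⟩
    calc dCE (n + 1) (e.compAlternatingMap (CartanCalculus.lowerAlternating ρ (n + 1) ω)) x
      _ = e (dCE (n + 1) (CartanCalculus.lowerAlternating ρ (n + 1) ω) x) :=
        dCE_linearMap_comp e _ x
      _ = 0 := by
        rw [CartanCalculus.coe_lowerAlternating,
          CartanCalculus.dCE_lower_eq_zero_of_closed_of_invariant ρ (mod_cast hω) hcl hinv,
          map_zero]
  · exact (hf.1 n hn le_rfl).2.1.linearMap_comp (((-1 : ℝ) ^ n * varsigma n) • e)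
  · calc dCE n (fun y => (((-1 : ℝ) ^ n * varsigma n) • e) (f n y)) x
      _ = ((-1 : ℝ) ^ n * varsigma n) * e (-varsigma (n + 1) • C.lower ρ (n + 1) ω x) := by
        rw [dCE_linearMap_comp, hf.dCE_top, LinearMap.smul_apply, smul_eq_mul]
      _ = e (C.lower ρ (n + 1) ω x) := by
        rw [map_smul, smul_eq_mul]
        linear_combination -e (C.lower ρ (n + 1) ω x) *
          neg_one_pow_mul_varsigma_mul_varsigma_succ n
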